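/- arXiv:1210.8121 — 3 statements merged into one kernel-verified Lean document; each statement's English description precedes it below -/
import Mathlib

section
/- Let E be a finite-dimensional complex normed space, let T ⊆ E be a totally real real-linear subspace, and let τ : E → ℝ be a function that is twice Fréchet-differentiable at a point x ∈ E and satisfies: τ ≥ 0 on some neighborhood of x, τ(x) = 0, and D²τ(x)(v, v) > 0 for every v ∈ E with v ∉ T. Then τ is strongly plurisubharmonic at x, i.e. L_τ(x; v) > 0 for every v ≠ 0. -/
open Topology

/-- The Levi form of a function `ρ : E → ℝ` on a complex normed space `E` at a
point `x`, evaluated on a vector `v`: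
`L_ρ(x; v) = (1/4)(D²ρ(x)(v,v) + D²ρ(x)(iv,iv))`,
where `D²ρ(x)` is the second real Fréchet derivative. -/
noncomputable def leviForm {E : Type*} [NormedAddCommGroup E] [NormedSpace ℂ E]
    (ρ : E → ℝ) (x v : E) : ℝ :=
  (1/4) * (fderiv ℝ (fderiv ℝ ρ) x v v
    + fderiv ℝ (fderiv ℝ ρ) x (Complex.I • v) (Complex.I • v))

/-- Let `T` be a totally real real-linear subspace of a
finite-dimensional complex normed space `E` and `τ : E → ℝ` twice Fréchet-differentiable
at `x` (differentiable near `x`, with `fderiv` differentiable at `x`), with `τ ≥ 0`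
near `x`, `τ(x) = 0`, and `D²τ(x)(v,v) > 0` for every `v ∉ T`. Then `τ` is strongly
plurisubharmonic at `x`. -/
theorem strongly_psh_of_nonneg_vanishing_hessian_pos_off_totally_real
    {E : Type*} [NormedAddCommGroup E] [NormedSpace ℂ E] [FiniteDimensional ℂ E]
    (T : Submodule ℝ E) (hT : ∀ v ∈ T, Complex.I • v ∈ T → v = 0)
    (τ : E → ℝ) (x : E)
    (h1 : ∀ᶠ y in 𝓝 x, DifferentiableAt ℝ τ y)
    (h2 : DifferentiableAt ℝ (fderiv ℝ τ) x)
    (hnn : ∀ᶠ y in 𝓝 x, 0 ≤ τ y)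
    (hx0 : τ x = 0)
    (hpos : ∀ v : E, v ∉ T → 0 < fderiv ℝ (fderiv ℝ τ) x v v) :
    ∀ v : E, v ≠ 0 → 0 < leviForm τ x v := by
  set B := fderiv ℝ (fderiv ℝ τ) x with hB
  have key : ∀ w : E, w ∉ T → ∀ u : E, 0 ≤ B u u := by
    intro w hw u
    by_cases hu : u ∈ T
    · have hlim : Filter.Tendsto (fun t : ℝ => B u u + t * (B u w + B w u) + t ^ 2 * B w w)
          (𝓝[≠] 0) (𝓝 (B u u)) := by
        have hc : Continuous
            (fun t : ℝ => B u u + t * (B u w + B w u) + t ^ 2 * B w w) := by fun_prop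
        have h := hc.tendsto 0
        simp only [zero_mul, add_zero, ne_eq, OfNat.ofNat_ne_zero, not_false_eq_true,
          zero_pow] at h
        exact h.mono_left nhdsWithin_le_nhds
      refine ge_of_tendsto hlim ?_
      filter_upwards [self_mem_nhdsWithin] with t ht
      have hnot : u + t • w ∉ T := by
        intro h
        have h' := (T.add_mem_iff_right hu).1 h
        exact hw ((T.smul_mem_iff ht).1 h')
      have hp := hpos _ hnot
      simp only [map_add, map_smul, ContinuousLinearMap.add_apply,
        ContinuousLinearMap.smul_apply, smul_eq_mul] at hp
      nlinarith [hp]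
    · exact (hpos u hu).le
  intro v hv
  unfold leviForm
  rw [← hB]
  by_cases hvT : v ∈ T
  · have hI : Complex.I • v ∉ T := fun h => hv (hT v hvT h)
    have a := hpos _ hI
    have b := key _ hI v
    linarith
  · have a := hpos _ hvT
    have b := key _ hvT (Complex.I • v)
    linarith
end

section
/- Let E be a finite-dimensional complex normed space, U ⊆ E an open set, K ⊆ U a compact set, and ρ, φ : E → ℝ functions that are C² on U. Assume that the Levi form L_ρ(x; ·) is positive semidefinite (L_ρ(x; v) ≥ 0 for all v) at every x ∈ K, and that for every x ∈ K at least one of the two Levi forms L_ρ(x; ·), L_φ(x; ·) is positive definite. Then there exists a constant c > 0 such that the function ρ + c·φ is strongly plurisubharmonic at every point of K. -/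
open Topology

theorem leviForm_continuousOn_aux {E : Type*} [NormedAddCommGroup E] [NormedSpace ℂ E]
    (U : Set E) (hU : IsOpen U) (ρ : E → ℝ) (hρ : ContDiffOn ℝ 2 ρ U) :
    ContinuousOn (fun p : E × E => leviForm ρ p.1 p.2) (U ×ˢ Set.univ) := by
  have h1 : ContDiffOn ℝ 1 (fderiv ℝ ρ) U := hρ.fderiv_of_isOpen hU (by norm_num)
  have h2 : ContinuousOn (fderiv ℝ (fderiv ℝ ρ)) U :=
    h1.continuousOn_fderiv_of_isOpen hU (by norm_num)
  have h3 : ContinuousOn (fun p : E × E => fderiv ℝ (fderiv ℝ ρ) p.1) (U ×ˢ Set.univ) :=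
    h2.comp continuousOn_fst (fun p hp => hp.1)
  have hI : ContinuousOn (fun p : E × E => Complex.I • p.2) (U ×ˢ Set.univ) :=
    (continuous_snd.const_smul Complex.I).continuousOn
  unfold leviForm
  exact continuousOn_const.mul (((h3.clm_apply continuousOn_snd).clm_apply continuousOn_snd).add
    ((h3.clm_apply hI).clm_apply hI))

theorem leviForm_add_aux {E : Type*} [NormedAddCommGroup E] [NormedSpace ℂ E]
    (U : Set E) (hU : IsOpen U) (ρ φ : E → ℝ) (hρ : ContDiffOn ℝ 2 ρ U)
    (hφ : ContDiffOn ℝ 2 φ U) (c : ℝ) (x : E) (hx : x ∈ U) (v : E) :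
    leviForm (fun y => ρ y + c * φ y) x v = leviForm ρ x v + c * leviForm φ x v := by
  have d1 : ∀ f : E → ℝ, ContDiffOn ℝ 2 f U → ∀ y ∈ U, DifferentiableAt ℝ f y :=
    fun f hf y hy => (hf.differentiableOn (by norm_num)).differentiableAt (hU.mem_nhds hy)
  have d2 : ∀ f : E → ℝ, ContDiffOn ℝ 2 f U → DifferentiableAt ℝ (fderiv ℝ f) x :=
    fun f hf => ((hf.fderiv_of_isOpen hU (m := 1) (by norm_num)).differentiableOn
      (by norm_num)).differentiableAt (hU.mem_nhds hx)
  have e : fderiv ℝ (fun y => ρ y + c * φ y) =ᶠ[𝓝 x]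
      (fun y => fderiv ℝ ρ y + c • fderiv ℝ φ y) := by
    filter_upwards [hU.mem_nhds hx] with y hy
    exact ((d1 ρ hρ y hy).hasFDerivAt.add ((d1 φ hφ y hy).hasFDerivAt.const_mul c)).fderiv
  have e2 : fderiv ℝ (fderiv ℝ (fun y => ρ y + c * φ y)) x
      = fderiv ℝ (fderiv ℝ ρ) x + c • fderiv ℝ (fderiv ℝ φ) x := by
    rw [e.fderiv_eq]
    exact ((d2 ρ hρ).hasFDerivAt.add ((d2 φ hφ).hasFDerivAt.const_smul c)).fderiv
  unfold leviForm
  rw [e2]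
  simp only [ContinuousLinearMap.add_apply, ContinuousLinearMap.smul_apply, smul_eq_mul]
  ring

theorem leviForm_smul_aux {E : Type*} [NormedAddCommGroup E] [NormedSpace ℂ E]
    (ρ : E → ℝ) (x v : E) (r : ℝ) : leviForm ρ x (r • v) = r ^ 2 * leviForm ρ x v := by
  unfold leviForm
  rw [smul_comm Complex.I r v]
  simp only [map_smul, ContinuousLinearMap.smul_apply, smul_eq_mul]
  ring

/-- Let `K` be a compact subset of an open set `U` in a
finite-dimensional complex normed space and `ρ, φ` be `C²` on `U`. If the Levi form
of `ρ` is positive semidefinite at every point of `K`, and at every point of `K` at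
least one of the Levi forms of `ρ`, `φ` is positive definite, then for some constant
`c > 0` the function `ρ + c·φ` is strongly plurisubharmonic at every point of `K`. -/
theorem strongly_psh_add_small_multiple
    {E : Type*} [NormedAddCommGroup E] [NormedSpace ℂ E] [FiniteDimensional ℂ E]
    (U : Set E) (hU : IsOpen U) (K : Set E) (hK : IsCompact K) (hKU : K ⊆ U)
    (ρ φ : E → ℝ) (hρ : ContDiffOn ℝ 2 ρ U) (hφ : ContDiffOn ℝ 2 φ U)
    (hpsd : ∀ x ∈ K, ∀ v : E, 0 ≤ leviForm ρ x v)
    (hpos : ∀ x ∈ K, (∀ v : E, v ≠ 0 → 0 < leviForm ρ x v) ∨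
      (∀ v : E, v ≠ 0 → 0 < leviForm φ x v)) :
    ∃ c : ℝ, 0 < c ∧
      ∀ x ∈ K, ∀ v : E, v ≠ 0 → 0 < leviForm (fun y => ρ y + c * φ y) x v := by
  haveI : ProperSpace E := FiniteDimensional.proper ℂ E
  set S : Set (E × E) := K ×ˢ Metric.sphere (0 : E) 1 with hS
  have hSc : IsCompact S := hK.prod (isCompact_sphere 0 1)
  have hSU : S ⊆ U ×ˢ Set.univ := fun p hp => ⟨hKU hp.1, trivial⟩
  have cf := (leviForm_continuousOn_aux U hU ρ hρ).mono hSU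
  have cg := (leviForm_continuousOn_aux U hU φ hφ).mono hSU
  obtain ⟨M, hM⟩ := hSc.exists_bound_of_continuousOn cg
  set A : Set (E × E) := S ∩ (fun p : E × E => leviForm φ p.1 p.2) ⁻¹' Set.Iic 0 with hA
  have hAc : IsCompact A :=
    hSc.of_isClosed_subset (cg.preimage_isClosed_of_isClosed hSc.isClosed isClosed_Iic)
      Set.inter_subset_left
  have hne : ∀ p ∈ S, p.2 ≠ 0 := by
    intro p hp h0
    have h := hp.2
    rw [h0] at h
    simp at h
  have hApos : ∀ p ∈ A, 0 < leviForm ρ p.1 p.2 := by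
    intro p hp
    rcases hpos p.1 hp.1.1 with h | h
    · exact h _ (hne p hp.1)
    · exact absurd (h _ (hne p hp.1)) (not_lt.mpr hp.2)
  obtain ⟨m, hm, hmA⟩ : ∃ m : ℝ, 0 < m ∧ ∀ p ∈ A, m ≤ leviForm ρ p.1 p.2 := by
    rcases A.eq_empty_or_nonempty with h | h
    · exact ⟨1, one_pos, by simp [h]⟩
    · obtain ⟨q, hq, hmin⟩ := hAc.exists_isMinOn h (cf.mono Set.inter_subset_left)
      exact ⟨_, hApos q hq, fun p hp => hmin hp⟩
  have hM1 : 0 < |M| + 1 := by positivity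
  refine ⟨m / (|M| + 1), by positivity, ?_⟩
  set c := m / (|M| + 1) with hc
  have hcpos : 0 < c := by positivity
  have hcm : c * (|M| + 1) = m := by rw [hc]; field_simp
  have key : ∀ p ∈ S, 0 < leviForm ρ p.1 p.2 + c * leviForm φ p.1 p.2 := by
    intro p hp
    by_cases h : leviForm φ p.1 p.2 ≤ 0
    · have h1 := hmA p ⟨hp, h⟩
      have h2 : -|M| ≤ leviForm φ p.1 p.2 :=
        neg_le_of_abs_le ((hM p hp).trans (le_abs_self M))
      nlinarith
    · have h1 := hpsd p.1 hp.1 p.2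
      have h2 := mul_pos hcpos (not_le.mp h)
      linarith
  intro x hx v hv
  have hn : 0 < ‖v‖ := norm_pos_iff.mpr hv
  have hu : ((x, ‖v‖⁻¹ • v) : E × E) ∈ S := by
    refine ⟨hx, ?_⟩
    simp [norm_smul, hn.ne']
  have k := key _ hu
  simp only at k
  rw [leviForm_smul_aux, leviForm_smul_aux] at k
  rw [leviForm_add_aux U hU ρ φ hρ hφ c x (hKU hx) v]
  have h3 : 0 < (‖v‖⁻¹) ^ 2 := by positivity
  refine pos_of_mul_pos_right (a := (‖v‖⁻¹) ^ 2) ?_ h3.le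
  linarith
end

section
/- Let M ⊆ ℂⁿ be a compact set that is a C² embedded totally real submanifold: for every p ∈ M there exist an open neighborhood V of p in ℂⁿ, an integer d ≥ 0, an open set Ω ⊆ ℝᵈ, and a C² map g : Ω → ℂⁿ that is a homeomorphism onto M ∩ V and whose real Fréchet derivative Dg(t) is injective with totally real range at every t ∈ Ω. Then there exist an open set U ⊆ ℂⁿ with M ⊆ U and a C² function τ : U → ℝ such that τ ≥ 0 on U, τ⁻¹(0) = M, and τ is strongly plurisubharmonic at every point of U. -/
open Topology

section Aux
variable {E : Type*} [NormedAddCommGroup E]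

theorem levi_cont [NormedSpace ℂ E] {τ : E → ℝ} (h : ContDiff ℝ 2 τ) :
    Continuous fun z : E × E => leviForm τ z.1 z.2 := by
  have h1 : ContDiff ℝ 1 (fderiv ℝ τ) := h.fderiv_right (by norm_num)
  have h2 : Continuous (fderiv ℝ (fderiv ℝ τ)) := h1.continuous_fderiv (by norm_num)
  unfold leviForm
  have h3 : Continuous fun z : E × E => fderiv ℝ (fderiv ℝ τ) z.1 := h2.comp continuous_fst
  have h4 : Continuous fun z : E × E => Complex.I • z.2 := continuous_snd.const_smul _
  exact continuous_const.mul (((h3.clm_apply continuous_snd).clm_apply continuous_snd).add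
    ((h3.clm_apply h4).clm_apply h4))

theorem levi_smul [NormedSpace ℂ E] (τ : E → ℝ) (x v : E) (c : ℝ) :
    leviForm τ x (c • v) = c ^ 2 * leviForm τ x v := by
  unfold leviForm
  rw [smul_comm Complex.I c v]
  simp only [map_smul, smul_apply, smul_eq_mul]
  ring

theorem levi_open [NormedSpace ℂ E] [FiniteDimensional ℂ E] {τ : E → ℝ} (h : ContDiff ℝ 2 τ) :
    IsOpen {x | ∀ v, v ≠ 0 → 0 < leviForm τ x v} := by
  have : ProperSpace E := FiniteDimensional.proper ℂ E
  rw [isOpen_iff_mem_nhds]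
  intro x hx
  have := (isCompact_sphere (0 : E) 1).eventually_forall_of_forall_eventually
    (x₀ := x) (P := fun x v => 0 < leviForm τ x v) (by
      intro v hv
      have hv0 : v ≠ 0 := by
        rintro rfl
        simp at hv
      exact (levi_cont h).continuousAt.eventually (lt_mem_nhds (hx v hv0)))
  filter_upwards [this] with y hy v hv
  have hn : ‖v‖ ≠ 0 := norm_ne_zero_iff.mpr hv
  have h1 := hy (‖v‖⁻¹ • v) (by simp [norm_smul, hn])
  rw [levi_smul] at h1
  exact pos_of_mul_pos_right h1 (by positivity)

theorem levi_sum [NormedSpace ℂ E] {ι : Type*} (s : Finset ι) (τ : ι → E → ℝ)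
    (h : ∀ i, ContDiff ℝ 2 (τ i)) (x v : E) :
    leviForm (fun y => ∑ i ∈ s, τ i y) x v = ∑ i ∈ s, leviForm (τ i) x v := by
  have h0 : fderiv ℝ (fun y => ∑ i ∈ s, τ i y) = fun y => ∑ i ∈ s, fderiv ℝ (τ i) y := by
    ext1 y
    exact fderiv_fun_sum fun i _ => (h i).differentiable (by norm_num) y
  have h1 : fderiv ℝ (fun y => ∑ i ∈ s, fderiv ℝ (τ i) y) x
      = ∑ i ∈ s, fderiv ℝ (fderiv ℝ (τ i)) x :=
    fderiv_fun_sum fun i _ =>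
      ((h i).fderiv_right (m := 1) (by norm_num)).differentiable (by norm_num) x
  unfold leviForm
  rw [h0, h1, ← Finset.mul_sum, Finset.sum_add_distrib]
  simp only [sum_apply]

theorem levi_sq [InnerProductSpace ℂ E] {H : E → E} (h : ContDiff ℝ 2 H) {q : E} (hq : H q = 0)
    (v : E) : leviForm (fun x => ‖H x‖ ^ 2) q v
      = (1/2) * (‖fderiv ℝ H q v‖ ^ 2 + ‖fderiv ℝ H q (Complex.I • v)‖ ^ 2) := by
  letI : InnerProductSpace ℝ E := InnerProductSpace.complexToReal
  have hd : ∀ x, HasFDerivAt H (fderiv ℝ H x) x := fun x =>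
    (h.differentiable (by norm_num) x).hasFDerivAt
  have h1 : ContDiff ℝ 1 (fderiv ℝ H) := h.fderiv_right (by norm_num)
  have hτ : ContDiff ℝ 2 (fun x => ‖H x‖ ^ 2) := h.norm_sq ℂ
  have hτ1 : ContDiff ℝ 1 (fderiv ℝ (fun x => ‖H x‖ ^ 2)) := hτ.fderiv_right (by norm_num)
  have e1 : ∀ x w, fderiv ℝ (fun x => ‖H x‖ ^ 2) x w = 2 * inner ℝ (H x) (fderiv ℝ H x w) := by
    intro x w
    rw [((hd x).norm_sq).fderiv]
    simp
  have e2 : ∀ w, fderiv ℝ (fderiv ℝ (fun x => ‖H x‖ ^ 2)) q w w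
      = 2 * ‖fderiv ℝ H q w‖ ^ 2 := by
    intro w
    have a1 : HasFDerivAt (fun x => fderiv ℝ (fun x => ‖H x‖ ^ 2) x w)
        ((fderiv ℝ (fderiv ℝ (fun x => ‖H x‖ ^ 2)) q).flip w) q := by
      have := ((hτ1.differentiable (by norm_num) q).hasFDerivAt).clm_apply (hasFDerivAt_const w q)
      rw [ContinuousLinearMap.comp_zero, zero_add] at this
      exact this
    have a2 : HasFDerivAt (fun x => fderiv ℝ H x w)
        ((fderiv ℝ (fderiv ℝ H) q).flip w) q := by
      have := ((h1.differentiable (by norm_num) q).hasFDerivAt).clm_apply (hasFDerivAt_const w q)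
      rw [ContinuousLinearMap.comp_zero, zero_add] at this
      exact this
    have a3 := ((hd q).inner ℝ a2).const_mul 2
    have a4 : (fun x => fderiv ℝ (fun x => ‖H x‖ ^ 2) x w)
      = fun x => 2 * inner ℝ (H x) (fderiv ℝ H x w) := funext fun x => e1 x w
    rw [a4] at a1
    have := DFunLike.congr_fun (a1.unique a3) w
    simpa [hq] using this
  unfold leviForm
  rw [e2, e2]
  ring

theorem local_H [InnerProductSpace ℂ E] [FiniteDimensional ℂ E] {F : Type*}
    [NormedAddCommGroup F] [NormedSpace ℝ F] [FiniteDimensional ℝ F]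
    {M V : Set E} (hV : IsOpen V) {p : E} (hpM : p ∈ M) (hpV : p ∈ V)
    {Ω : Set F} {g : F → E} {g' : E → F} (hΩ : IsOpen Ω) (hg : ContDiffOn ℝ 2 g Ω)
    (him : g '' Ω = M ∩ V) (hg' : ContinuousOn g' (M ∩ V)) (hl : ∀ t ∈ Ω, g' (g t) = t)
    (hinj : ∀ t ∈ Ω, Function.Injective ⇑(fderivWithin ℝ g Ω t)) :
    ∃ H : E → E, ContDiff ℝ 2 H ∧ (∀ x ∈ M, H x = 0) ∧ (∀ᶠ x in 𝓝 p, H x = 0 → x ∈ M) ∧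
      ∃ t ∈ Ω, ∀ v, fderiv ℝ H p v = 0 → v ∈ Set.range ⇑(fderivWithin ℝ g Ω t) := by
  have : FiniteDimensional ℝ E := FiniteDimensional.complexToReal E
  have : CompleteSpace F := FiniteDimensional.complete ℝ F
  obtain ⟨t₀, ht₀, rfl⟩ : p ∈ g '' Ω := him ▸ ⟨hpM, hpV⟩
  have hgat : ContDiffAt ℝ 2 g t₀ := hg.contDiffAt (hΩ.mem_nhds ht₀)
  have hA := hinj t₀ ht₀
  rw [fderivWithin_of_isOpen hΩ ht₀] at hA
  set A := fderiv ℝ g t₀ with hAdef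
  obtain ⟨π₀, hπ₀⟩ := LinearMap.exists_leftInverse_of_injective A.toLinearMap
    (LinearMap.ker_eq_bot.mpr hA)
  set π : E →L[ℝ] F := LinearMap.toContinuousLinearMap π₀ with hπdef
  have hπA : ∀ s, π (A s) = s := fun s => LinearMap.congr_fun hπ₀ s
  have hgd : HasFDerivAt g A t₀ := (hgat.differentiableAt (by norm_num)).hasFDerivAt
  have hφ : ContDiffAt ℝ 2 (fun t => π (g t)) t₀ := π.contDiff.contDiffAt.comp t₀ hgat
  have hφd : HasFDerivAt (fun t => π (g t)) ((ContinuousLinearEquiv.refl ℝ F : F ≃L[ℝ] F) : F →L[ℝ] F) t₀ := by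
    have := π.hasFDerivAt.comp t₀ hgd
    have e : ((ContinuousLinearEquiv.refl ℝ F : F ≃L[ℝ] F) : F →L[ℝ] F) = π.comp A := by
      ext s
      exact (hπA s).symm
    rw [e]
    exact this
  have hφs := hφ.hasStrictFDerivAt' hφd (by norm_num)
  set ψ : F → F := hφ.localInverse hφd (by norm_num) with hψdef
  have hψ : ContDiffAt ℝ 2 ψ (π (g t₀)) := hφ.to_localInverse hφd (by norm_num)
  have hψl : ∀ᶠ t in 𝓝 t₀, ψ (π (g t)) = t := hφs.eventually_left_inverse
  have hψ0 : ψ (π (g t₀)) = t₀ := hψl.self_of_nhds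
  have hψd : HasFDerivAt ψ (ContinuousLinearMap.id ℝ F) (π (g t₀)) :=
    hφs.to_localInverse.hasFDerivAt
  -- the local defining map
  set k : E → F := fun x => ψ (π x) with hk
  have hkc : ContDiffAt ℝ 2 k (g t₀) := hψ.comp (g t₀) π.contDiff.contDiffAt
  have hk0 : k (g t₀) = t₀ := hψ0
  set h : E → E := fun x => x - g (k x) with hh
  have hhc : ContDiffAt ℝ 2 h (g t₀) := by
    refine contDiffAt_id.sub (ContDiffAt.comp (g t₀) ?_ hkc)
    rw [hk0]; exact hgat
  have hhd : HasFDerivAt h (ContinuousLinearMap.id ℝ E - A.comp π) (g t₀) := by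
    have h1 : HasFDerivAt k π (g t₀) := by
      exact hψd.comp (g t₀) π.hasFDerivAt
    have h2 : HasFDerivAt g A (k (g t₀)) := by rw [hk0]; exact hgd
    exact (hasFDerivAt_id _).sub (h2.comp (g t₀) h1)
  have hkΩ : ∀ᶠ x in 𝓝 (g t₀), k x ∈ Ω := by
    apply hkc.continuousAt.eventually
    rw [hk0]; exact hΩ.mem_nhds ht₀
  have hzero : ∀ᶠ x in 𝓝 (g t₀), x ∈ M → h x = 0 := by
    have c1 : Filter.Tendsto g' (𝓝[M ∩ V] (g t₀)) (𝓝 t₀) := by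
      have := hg' (g t₀) ⟨hpM, hpV⟩
      rwa [ContinuousWithinAt, hl t₀ ht₀] at this
    have c2 := eventually_nhdsWithin_iff.mp (c1.eventually hψl)
    filter_upwards [c2, hV.mem_nhds hpV] with x hx hxV hxM
    obtain ⟨t, ht, rfl⟩ : x ∈ g '' Ω := him ▸ ⟨hxM, hxV⟩
    have := hx ⟨hxM, hxV⟩
    rw [hl t ht] at this
    simp only [hh, hk, this, sub_self]
  have hgood : ∀ᶠ x in 𝓝 (g t₀), ContDiffAt ℝ 2 h x ∧ (x ∈ M → h x = 0) :=
    (hhc.eventually (by norm_num)).and hzero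
  obtain ⟨χ, -, hχc, hχ1, hχ2⟩ : ∃ χ : E → ℝ, True ∧ ContDiff ℝ 2 χ ∧ (χ =ᶠ[𝓝 (g t₀)] 1) ∧
      ∀ x ∈ tsupport χ, ContDiffAt ℝ 2 h x ∧ (x ∈ M → h x = 0) := by
    obtain ⟨r, hr, hr2⟩ := Metric.nhds_basis_closedBall.eventually_iff.mp hgood
    let f : ContDiffBump (g t₀) := ⟨r / 2, r, by linarith, by linarith⟩
    exact ⟨f, trivial, f.contDiff, f.eventuallyEq_one, fun x hx => hr2 (f.tsupport_eq ▸ hx)⟩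
  refine ⟨fun x => χ x • h x, ?_, ?_, ?_, t₀, ht₀, ?_⟩
  · rw [contDiff_iff_contDiffAt]
    intro x
    by_cases hx : x ∈ tsupport χ
    · exact hχc.contDiffAt.smul (hχ2 x hx).1
    · have : (fun x => χ x • h x) =ᶠ[𝓝 x] fun _ => 0 := by
        filter_upwards [notMem_tsupport_iff_eventuallyEq.mp hx] with y hy
        simp [hy]
      exact contDiffAt_const.congr_of_eventuallyEq this
  · intro x hx
    by_cases hx' : x ∈ tsupport χ
    · simp [(hχ2 x hx').2 hx]
    · simp [image_eq_zero_of_notMem_tsupport hx']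
  · filter_upwards [hχ1, hkΩ] with x hx hxk h0
    rw [hx, Pi.one_apply, one_smul] at h0
    have : x = g (k x) := sub_eq_zero.mp h0
    have h3 : x ∈ g '' Ω := ⟨k x, hxk, this.symm⟩
    rw [him] at h3
    exact h3.1
  · intro v hv
    have e : (fun x => χ x • h x) =ᶠ[𝓝 (g t₀)] h := by
      filter_upwards [hχ1] with x hx
      simp [hx]
    rw [e.fderiv_eq, hhd.fderiv] at hv
    rw [fderivWithin_of_isOpen hΩ ht₀]
    refine ⟨π v, ?_⟩
    simpa [sub_eq_zero] using (sub_eq_zero.mp hv).symm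

theorem main_aux [InnerProductSpace ℂ E] [FiniteDimensional ℂ E] (M : Set E) (hM : IsCompact M)
    (hloc : ∀ p ∈ M, ∃ H : E → E, ContDiff ℝ 2 H ∧ (∀ x ∈ M, H x = 0) ∧
      (∀ᶠ x in 𝓝 p, H x = 0 → x ∈ M) ∧
      ∀ v, fderiv ℝ H p v = 0 → fderiv ℝ H p (Complex.I • v) = 0 → v = 0) :
    ∃ U : Set E, IsOpen U ∧ M ⊆ U ∧
      ∃ τ : E → ℝ, ContDiffOn ℝ 2 τ U ∧
        (∀ x ∈ U, 0 ≤ τ x) ∧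
        (∀ x ∈ U, (τ x = 0 ↔ x ∈ M)) ∧
        ∀ x ∈ U, ∀ v, v ≠ 0 → 0 < leviForm τ x v := by
  choose! H hH hH0 hHM hHi using hloc
  have hW : ∀ p ∈ M, ∃ W ∈ 𝓝 p, IsOpen W ∧ ∀ x ∈ W, (H p x = 0 → x ∈ M) ∧
      ∀ v, v ≠ 0 → 0 < leviForm (fun x => ‖H p x‖ ^ 2) x v := by
    intro p hp
    have h1 : p ∈ {x | ∀ v, v ≠ 0 → 0 < leviForm (fun x => ‖H p x‖ ^ 2) x v} := by
      intro v hv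
      rw [levi_sq (hH p hp) (hH0 p hp p hp)]
      by_contra hc
      have hc1 := sq_nonneg ‖fderiv ℝ (H p) p v‖
      have hc2 := sq_nonneg ‖fderiv ℝ (H p) p (Complex.I • v)‖
      refine hv (hHi p hp v ?_ ?_)
      · have : ‖fderiv ℝ (H p) p v‖ ^ 2 = 0 := by linarith
        simpa using this
      · have : ‖fderiv ℝ (H p) p (Complex.I • v)‖ ^ 2 = 0 := by linarith
        simpa using this
    have h2 := (levi_open ((hH p hp).norm_sq ℂ)).mem_nhds h1
    obtain ⟨W, hW1, hW2, hW3⟩ := mem_nhds_iff.mp ((hHM p hp).and h2)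
    exact ⟨W, hW2.mem_nhds hW3, hW2, fun x hx => hW1 hx⟩
  choose! W hWn hWo hWp using hW
  obtain ⟨s, hs, hsM⟩ := hM.elim_nhds_subcover W hWn
  set σ : s → E → ℝ := fun i x => ‖H i x‖ ^ 2 with hσ
  have hσc : ∀ i, ContDiff ℝ 2 (σ i) := fun i => (hH i (hs i i.2)).norm_sq ℂ
  set τ : E → ℝ := fun x => ∑ i ∈ Finset.univ, σ i x with hτ
  have hτc : ContDiff ℝ 2 τ := ContDiff.sum fun i _ => hσc i
  refine ⟨(⋃ x ∈ s, W x) ∩ {x | ∀ v, v ≠ 0 → 0 < leviForm τ x v}, ?_, ?_, τ, hτc.contDiffOn,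
    ?_, ?_, fun x hx => hx.2⟩
  · exact (isOpen_biUnion fun x hx => hWo x (hs x hx)).inter (levi_open hτc)
  · intro q hq
    refine ⟨hsM hq, fun v hv => ?_⟩
    rw [hτ, levi_sum _ _ hσc]
    obtain ⟨p, hp, hqp⟩ := Set.mem_iUnion₂.mp (hsM hq)
    refine Finset.sum_pos' (fun i _ => ?_) ⟨⟨p, hp⟩, Finset.mem_univ _, (hWp p (hs p hp) q hqp).2 v hv⟩
    rw [hσ, levi_sq (hH i (hs i i.2)) (hH0 i (hs i i.2) q hq)]
    positivity
  · intro x _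
    exact Finset.sum_nonneg fun i _ => by positivity
  · rintro x ⟨hx, -⟩
    constructor
    · intro h0
      obtain ⟨p, hp, hxp⟩ := Set.mem_iUnion₂.mp hx
      have := (Finset.sum_eq_zero_iff_of_nonneg (fun i _ => by positivity)).mp h0 ⟨p, hp⟩
        (Finset.mem_univ _)
      exact (hWp p (hs p hp) x hxp).1 (by simpa [hσ] using this)
    · intro hxM
      exact Finset.sum_eq_zero fun i _ => by simp [hσ, hH0 i (hs i i.2) x hxM]

end Aux

/-- Let `M ⊆ ℂⁿ` be a compact `C²` embedded totally real
submanifold: every `p ∈ M` has an open neighborhood `V` in `ℂⁿ` such that `M ∩ V`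
is the image of a `C²` map `g` on an open set `Ω ⊆ ℝᵈ` which is a homeomorphism
onto `M ∩ V` (witnessed by a continuous left inverse `g'` on `M ∩ V`), whose
derivative is injective with totally real range at every point of `Ω`. Then there
are an open set `U ⊇ M` and a `C²` function `τ : U → ℝ` with `τ ≥ 0`,
`τ⁻¹(0) = M`, and `τ` strongly plurisubharmonic at every point of `U`. -/
theorem totally_real_compact_submanifold_has_spsh_defining_function
    (n : ℕ) (M : Set (EuclideanSpace ℂ (Fin n))) (hM : IsCompact M)
    (hchart : ∀ p ∈ M, ∃ V : Set (EuclideanSpace ℂ (Fin n)), IsOpen V ∧ p ∈ V ∧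
      ∃ (d : ℕ) (Ω : Set (EuclideanSpace ℝ (Fin d)))
        (g : EuclideanSpace ℝ (Fin d) → EuclideanSpace ℂ (Fin n))
        (g' : EuclideanSpace ℂ (Fin n) → EuclideanSpace ℝ (Fin d)),
        IsOpen Ω ∧ ContDiffOn ℝ 2 g Ω ∧ g '' Ω = M ∩ V ∧
        ContinuousOn g' (M ∩ V) ∧ (∀ t ∈ Ω, g' (g t) = t) ∧
        ∀ t ∈ Ω, Function.Injective ⇑(fderivWithin ℝ g Ω t) ∧
          ∀ v ∈ Set.range ⇑(fderivWithin ℝ g Ω t),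
            Complex.I • v ∈ Set.range ⇑(fderivWithin ℝ g Ω t) → v = 0) :
    ∃ U : Set (EuclideanSpace ℂ (Fin n)), IsOpen U ∧ M ⊆ U ∧
      ∃ τ : EuclideanSpace ℂ (Fin n) → ℝ, ContDiffOn ℝ 2 τ U ∧
        (∀ x ∈ U, 0 ≤ τ x) ∧
        (∀ x ∈ U, (τ x = 0 ↔ x ∈ M)) ∧
        ∀ x ∈ U, ∀ v, v ≠ 0 → 0 < leviForm τ x v := by
  refine main_aux M hM fun p hp => ?_
  obtain ⟨V, hV, hpV, d, Ω, g, g', hΩ, hg, him, hg', hl, hD⟩ := hchart p hp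
  obtain ⟨H, h1, h2, h3, t, ht, h4⟩ :=
    local_H hV hp hpV hΩ hg him hg' hl fun t ht => (hD t ht).1
  exact ⟨H, h1, h2, h3, fun v hv hiv => (hD t ht).2 v (h4 v hv) (h4 _ hiv)⟩
end
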